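/- arXiv:1703.01581 — 4 statements merged into one kernel-verified Lean document; each statement's English description precedes it below -/
import Mathlib

section
/- Let S be a dense subsemigroup of (ℍ, +) such that S ∩ (B(1) \ {0}) is a subsemigroup of (B(1) \ {0}, ·), where B(1) is the open unit ball around 0. If A ⊆ S is an IP set near 0 in S, then for every s ∈ S ∩ B(1) \ {0}, the set sA = {s·a : a ∈ A} is also an IP set near 0, and likewise As = {a·s : a ∈ A} is an IP set near 0. -/
open Filter Topology

/-- Finite sums of distinct terms of a sequence of quaternions. -/
def FS (x : ℕ → Quaternion ℝ) : Set (Quaternion ℝ) :=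
  {a | ∃ H : Finset ℕ, H.Nonempty ∧ a = ∑ t ∈ H, x t}

/-- The series `∑ₙ xₙ` converges (its partial sums converge). -/
def SeriesConverges (x : ℕ → Quaternion ℝ) : Prop :=
  ∃ L : Quaternion ℝ, Tendsto (fun N => ∑ n ∈ Finset.range N, x n) atTop (𝓝 L)

/-- `A` is an IP set near 0 in `S`: there is a sequence in `S` whose series converges
and whose set of finite sums lies in `A`. -/
def IPNearZero (S A : Set (Quaternion ℝ)) : Prop :=
  ∃ x : ℕ → Quaternion ℝ, (∀ n, x n ∈ S) ∧ SeriesConverges x ∧ FS x ⊆ A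

theorem aux_translate (S A : Set (Quaternion ℝ)) (f : Quaternion ℝ →+ Quaternion ℝ)
    (hf : Continuous f) (hfS : ∀ y ∈ S, y ∈ Metric.ball (0 : Quaternion ℝ) 1 → f y ∈ S)
    (hA : IPNearZero S A) : IPNearZero S (f '' A) := by
  obtain ⟨x, hxS, ⟨L, hL⟩, hFS⟩ := hA
  have h0 : Tendsto x atTop (𝓝 0) := by
    have h1 := (hL.comp (tendsto_add_atTop_nat 1)).sub hL
    simpa [Function.comp_def, Finset.sum_range_succ] using h1
  obtain ⟨N, hN⟩ := eventually_atTop.1 (h0.eventually (Metric.ball_mem_nhds 0 one_pos))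
  refine ⟨fun n => f (x (n + N)), fun n => hfS _ (hxS _) (hN _ (by omega)), ?_, ?_⟩
  · refine ⟨f (L - ∑ n ∈ Finset.range N, x n), ?_⟩
    have h1 := (hL.comp (tendsto_add_atTop_nat N)).sub_const (∑ n ∈ Finset.range N, x n)
    refine ((hf.tendsto _).comp h1).congr fun M => ?_
    simp only [Function.comp_apply]
    rw [← map_sum, add_comm M N, Finset.sum_range_add, add_sub_cancel_left]
    simp only [add_comm]
  · rintro a ⟨H, hH, rfl⟩
    refine ⟨∑ t ∈ H.map (addRightEmbedding N), x t, hFS ⟨_, hH.map, rfl⟩, ?_⟩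
    simp [map_sum]

/-- Let `S` be a dense subsemigroup of `(ℍ, +)` such that
`S ∩ (B(1) \ {0})` is a subsemigroup of `(B(1) \ {0}, ·)`.  If `A ⊆ S` is an IP set
near 0 in `S`, then for every `s ∈ S ∩ B(1) \ {0}`, both `sA` and `As` are IP sets
near 0. -/
theorem ip_near_zero_translates (S : Set (Quaternion ℝ))
    (hSdense : Dense S)
    (hSadd : ∀ a ∈ S, ∀ b ∈ S, a + b ∈ S)
    (hSmul : ∀ a ∈ S ∩ (Metric.ball 0 1 \ {0}), ∀ b ∈ S ∩ (Metric.ball 0 1 \ {0}),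
      a * b ∈ S ∩ (Metric.ball 0 1 \ {0}))
    (A : Set (Quaternion ℝ)) (hAS : A ⊆ S) (hA : IPNearZero S A)
    (s : Quaternion ℝ) (hs : s ∈ (S ∩ Metric.ball 0 1) \ {0}) :
    IPNearZero S ((fun a => s * a) '' A) ∧ IPNearZero S ((fun a => a * s) '' A) := by
  obtain ⟨⟨hsS, hsb⟩, hs0⟩ := hs
  constructor
  · refine aux_translate S A (AddMonoidHom.mulLeft s) (continuous_const_mul s) ?_ hA
    intro y hy hyb
    by_cases h : y = 0
    · subst h; simpa using hy
    · exact (hSmul s ⟨hsS, hsb, hs0⟩ y ⟨hy, hyb, h⟩).1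
  · refine aux_translate S A (AddMonoidHom.mulRight s) (continuous_mul_const s) ?_ hA
    intro y hy hyb
    by_cases h : y = 0
    · subst h; simpa using hy
    · exact (hSmul y ⟨hy, hyb, h⟩ s ⟨hsS, hsb, hs0⟩).1
end

section
/- Let S be a dense subsemigroup of (ℍ, +) such that S ∩ (B(1) \ {0}) is a subsemigroup of (B(1) \ {0}, ·), where B(1) is the open unit ball around 0. If A ⊆ S is an IP* set near 0 in (S, +), then for every s ∈ S ∩ B(1) \ {0}, both s⁻¹A = {t ∈ S : s·t ∈ A} and As⁻¹ = {t ∈ S : t·s ∈ A} are IP* sets near 0. -/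
open Filter Topology

/-- `D` is an IP* set near 0 in `S`: it meets every IP set near 0 in an IP set near 0. -/
def IPStarNearZero (S D : Set (Quaternion ℝ)) : Prop :=
  ∀ C ⊆ S, IPNearZero S C → IPNearZero S (C ∩ D)

theorem ipstar_aux (S A : Set (Quaternion ℝ))
    (hSadd : ∀ a ∈ S, ∀ b ∈ S, a + b ∈ S)
    (hA : IPStarNearZero S A)
    (f g : Quaternion ℝ →+ Quaternion ℝ) (hf : Continuous f) (hg : Continuous g)
    (hgf : ∀ a, g (f a) = a) (hfg : ∀ a, f (g a) = a)
    (hfS : ∀ a ∈ S, a ∈ Metric.ball (0 : Quaternion ℝ) 1 → f a ∈ S) :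
    IPStarNearZero S {t | t ∈ S ∧ f t ∈ A} := by
  intro C hC hCI
  obtain ⟨x, hxS, ⟨L, hL⟩, hxC⟩ := hCI
  have hx0 : Tendsto x atTop (𝓝 0) := by
    have h1 := (hL.comp (tendsto_add_atTop_nat 1)).sub hL
    rw [sub_self] at h1
    refine h1.congr fun n => ?_
    simp [Finset.sum_range_succ]
  obtain ⟨N, hN⟩ := eventually_atTop.1 (hx0.eventually (Metric.ball_mem_nhds 0 one_pos))
  have hsum : ∀ (y : ℕ → Quaternion ℝ), (∀ n, y n ∈ S) →
      ∀ H : Finset ℕ, H.Nonempty → ∑ t ∈ H, y t ∈ S := fun y hy H hH =>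
    Finset.sum_induction_nonempty y (· ∈ S) (fun a b ha hb => hSadd a ha b hb) hH
      (fun t _ => hy t)
  have hyS : ∀ n, f (x (n + N)) ∈ S := fun n => hfS _ (hxS _) (hN _ (Nat.le_add_left _ _))
  have key : ∀ a ∈ FS (fun n => f (x (n + N))), g a ∈ C := by
    rintro a ⟨H, hH, rfl⟩
    apply hxC
    refine ⟨H.map (addRightEmbedding N), hH.map, ?_⟩
    simp [map_sum, hgf]
  obtain ⟨z, hzS, ⟨M, hM⟩, hz⟩ := hA (FS (fun n => f (x (n + N))))
    (by rintro a ⟨H, hH, rfl⟩; exact hsum _ hyS H hH)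
    ⟨fun n => f (x (n + N)), hyS, by
      refine ⟨f (L - ∑ n ∈ Finset.range N, x n), ?_⟩
      have h1 := (hf.tendsto _).comp
        ((hL.comp (tendsto_add_atTop_nat N)).sub_const (∑ n ∈ Finset.range N, x n))
      refine h1.congr fun n => ?_
      simp only [Function.comp, ← map_sum]
      congr 1
      rw [add_comm n N, Finset.sum_range_add]
      simp [add_comm], subset_rfl⟩
  have hzC : ∀ H : Finset ℕ, H.Nonempty → g (∑ t ∈ H, z t) ∈ C := fun H hH =>
    key _ (hz ⟨H, hH, rfl⟩).1
  refine ⟨fun n => g (z n), fun n => hC (by simpa using hzC {n} (by simp)), ⟨g M, ?_⟩, ?_⟩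
  · refine ((hg.tendsto _).comp hM).congr fun n => ?_
    simp [map_sum]
  · rintro a ⟨H, hH, rfl⟩
    rw [← map_sum]
    refine ⟨hzC H hH, hC (hzC H hH), ?_⟩
    rw [hfg]
    exact (hz ⟨H, hH, rfl⟩).2

/-- Let `S` be a dense subsemigroup of `(ℍ, +)` such that
`S ∩ (B(1) \ {0})` is a subsemigroup of `(B(1) \ {0}, ·)`.  If `A ⊆ S` is an IP* set
near 0 in `(S, +)`, then for every `s ∈ S ∩ B(1) \ {0}`, both
`s⁻¹A = {t ∈ S : s·t ∈ A}` and `As⁻¹ = {t ∈ S : t·s ∈ A}` are IP* sets near 0. -/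
theorem ipstar_near_zero_quotients (S : Set (Quaternion ℝ))
    (hSdense : Dense S)
    (hSadd : ∀ a ∈ S, ∀ b ∈ S, a + b ∈ S)
    (hSmul : ∀ a ∈ S ∩ (Metric.ball 0 1 \ {0}), ∀ b ∈ S ∩ (Metric.ball 0 1 \ {0}),
      a * b ∈ S ∩ (Metric.ball 0 1 \ {0}))
    (A : Set (Quaternion ℝ)) (hAS : A ⊆ S) (hA : IPStarNearZero S A)
    (s : Quaternion ℝ) (hs : s ∈ (S ∩ Metric.ball 0 1) \ {0}) :
    IPStarNearZero S {t | t ∈ S ∧ s * t ∈ A} ∧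
    IPStarNearZero S {t | t ∈ S ∧ t * s ∈ A} := by
  obtain ⟨⟨hsS, hsB⟩, hs0⟩ := hs
  have hs0' : s ≠ 0 := hs0
  constructor
  · refine ipstar_aux S A hSadd hA (AddMonoidHom.mulLeft s) (AddMonoidHom.mulLeft s⁻¹)
      (continuous_const.mul continuous_id) (continuous_const.mul continuous_id)
      (fun a => inv_mul_cancel_left₀ hs0' a) (fun a => mul_inv_cancel_left₀ hs0' a) ?_
    intro a ha hb
    by_cases h0 : a = 0
    · subst h0; simpa using ha
    · exact (hSmul s ⟨hsS, hsB, hs0⟩ a ⟨ha, hb, h0⟩).1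
  · refine ipstar_aux S A hSadd hA (AddMonoidHom.mulRight s) (AddMonoidHom.mulRight s⁻¹)
      (continuous_id.mul continuous_const) (continuous_id.mul continuous_const)
      (fun a => mul_inv_cancel_right₀ hs0' a) (fun a => inv_mul_cancel_right₀ hs0' a) ?_
    intro a ha hb
    by_cases h0 : a = 0
    · subst h0; simpa using ha
    · exact (hSmul a ⟨ha, hb, h0⟩ s ⟨hsS, hsB, hs0⟩).1
end

section
/- Let S be a dense subsemigroup of (ℍ, +). A subset A of S is an IP set near 0 (i.e., there is a sequence ⟨xₙ⟩ in S with ∑ₙ₌₁^∞ xₙ convergent and FS(⟨xₙ⟩ₙ₌₁^∞) ⊆ A) if and only if there exists an idempotent ultrafilter p ∈ 0⁺(S) with A ∈ p. -/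
open Filter Topology

/-- The semigroup operation `+` on the ultrafilters `βS_d` on `S`:
`A ∈ p + q` iff `{x ∈ S : {y ∈ S : x + y ∈ A} ∈ q} ∈ p`. -/
noncomputable def uaddS (S : Set (Quaternion ℝ)) (hS : ∀ a ∈ S, ∀ b ∈ S, a + b ∈ S)
    (p q : Ultrafilter S) : Ultrafilter S :=
  p.bind fun x => q.map fun y => (⟨x.1 + y.1, hS x.1 x.2 y.1 y.2⟩ : S)

/-- `0⁺(S)`: the ultrafilters on `S` every member of which meets every
ball `B(r)` around `0`; i.e. `{s ∈ S : ‖s‖ < r} ∈ p` for every `r > 0`. -/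
def zeroPlus (S : Set (Quaternion ℝ)) : Set (Ultrafilter S) :=
  {p | ∀ r : ℝ, 0 < r → {s : S | ‖(s : Quaternion ℝ)‖ < r} ∈ p}

theorem mem_uaddS (S : Set (Quaternion ℝ)) (hS : ∀ a ∈ S, ∀ b ∈ S, a + b ∈ S)
    (p q : Ultrafilter S) (B : Set S) :
    B ∈ uaddS S hS p q ↔
      ∀ᶠ x in (p : Filter S), ∀ᶠ y in (q : Filter S),
        (⟨x.1 + y.1, hS x.1 x.2 y.1 y.2⟩ : S) ∈ B :=
  Iff.rfl

theorem ip_forward (S : Set (Quaternion ℝ)) (hS : ∀ a ∈ S, ∀ b ∈ S, a + b ∈ S)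
    (x : ℕ → Quaternion ℝ) (hx : ∀ n, x n ∈ S) (hsum : Summable x) (A : Set (Quaternion ℝ))
    (hA : FS x ⊆ A) :
    ∃ p : Ultrafilter S, p ∈ zeroPlus S ∧ uaddS S hS p p = p ∧
        {x : S | (x : Quaternion ℝ) ∈ A} ∈ p := by
  let _ : AddSemigroup (Ultrafilter S) :=
    { add := uaddS S hS
      add_assoc := fun U V W => by
        apply Ultrafilter.coe_inj.mp
        apply Filter.ext
        intro B
        change (∀ᶠ a in (U : Filter S), _) ↔ _
        change _ ↔ (∀ᶠ a in (U : Filter S), ∀ᶠ b in (V : Filter S), ∀ᶠ c in (W : Filter S), _)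
        change (∀ᶠ a in (U : Filter S), ∀ᶠ b in (V : Filter S), ∀ᶠ c in (W : Filter S),
          (⟨(a.1 + b.1) + c.1, _⟩ : S) ∈ B) ↔ (∀ᶠ a in (U : Filter S), ∀ᶠ b in (V : Filter S),
            ∀ᶠ c in (W : Filter S), (⟨a.1 + (b.1 + c.1), _⟩ : S) ∈ B)
        simp only [add_assoc] }
  let F : ℕ → Set S := fun n =>
    {s | ∃ H : Finset ℕ, H.Nonempty ∧ (∀ t ∈ H, n ≤ t) ∧ (s : Quaternion ℝ) = ∑ t ∈ H, x t}
  let T : Set (Ultrafilter S) := ⋂ n, {U | F n ∈ U}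
  have h := exists_idempotent_in_compact_add_subsemigroup (M := Ultrafilter S) ?_ T ?_ ?_ ?_
  · obtain ⟨U, hU, hidem⟩ := h
    have hU' : ∀ n, F n ∈ U := fun n => Set.mem_iInter.mp hU n
    refine ⟨U, ?_, hidem, ?_⟩
    · intro r hr
      obtain ⟨s, hs⟩ := summable_iff_vanishing_norm.mp hsum r hr
      filter_upwards [hU' (s.sup id + 1)] with m hm
      obtain ⟨H, -, hH, hm⟩ := hm
      change ‖(m : Quaternion ℝ)‖ < r
      rw [hm]
      apply hs
      rw [Finset.disjoint_left]
      intro t ht hts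
      have h1 := hH t ht
      have h2 : id t ≤ s.sup id := Finset.le_sup hts
      simp only [id] at h2
      omega
    · filter_upwards [hU' 0] with m hm
      obtain ⟨H, hne, -, hm⟩ := hm
      exact hA ⟨H, hne, hm⟩
  · intro V
    refine ultrafilterBasis_is_basis.continuous_iff.2 <| Set.forall_mem_range.mpr fun s => ?_
    have h := ultrafilter_isOpen_basic
      {m : S | ∀ᶠ m' : S in (V : Filter S), (⟨m.1 + m'.1, hS m.1 m.2 m'.1 m'.2⟩ : S) ∈ s}
    have he : (fun W : Ultrafilter S => W + V) ⁻¹' {u | s ∈ u} = {u : Ultrafilter S |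
      {m : S | ∀ᶠ m' : S in (V : Filter S), (⟨m.1 + m'.1, hS m.1 m.2 m'.1 m'.2⟩ : S) ∈ s} ∈ u} := by
      ext W
      exact mem_uaddS S hS W V s
    rw [he]
    exact h
  · apply IsCompact.nonempty_iInter_of_sequence_nonempty_isCompact_isClosed
    · intro n U hU
      change F n ∈ U
      filter_upwards [show F (n+1) ∈ U from hU] with m hm
      obtain ⟨H, hne, hH, hm⟩ := hm
      exact ⟨H, hne, fun t ht => (Nat.le_succ n).trans (hH t ht), hm⟩
    · intro n
      exact ⟨pure ⟨x n, hx n⟩, Ultrafilter.mem_pure.mpr ⟨{n}, by simp, by simp, by simp⟩⟩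
    · exact (ultrafilter_isClosed_basic _).isCompact
    · intro n
      apply ultrafilter_isClosed_basic
  · exact IsClosed.isCompact (isClosed_iInter fun i => ultrafilter_isClosed_basic _)
  · intro U hU V hV
    have hU' : ∀ n, F n ∈ U := fun n => Set.mem_iInter.mp hU n
    have hV' : ∀ n, F n ∈ V := fun n => Set.mem_iInter.mp hV n
    refine Set.mem_iInter.mpr fun n => ?_
    change F n ∈ uaddS S hS U V
    rw [mem_uaddS]
    filter_upwards [hU' n] with m hm
    obtain ⟨H, hne, hH, hm⟩ := hm
    filter_upwards [hV' (H.sup id + 1 + n)] with m' hm'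
    obtain ⟨K, hne', hK, hm'⟩ := hm'
    refine ⟨H ∪ K, hne.mono Finset.subset_union_left, ?_, ?_⟩
    · intro t ht
      rcases Finset.mem_union.mp ht with h | h
      · exact hH t h
      · have := hK t h
        omega
    · rw [Finset.sum_union, ← hm, ← hm']
      rw [Finset.disjoint_left]
      intro t ht hts
      have h1 := hK t hts
      have h2 : id t ≤ H.sup id := Finset.le_sup ht
      simp only [id] at h2
      omega

theorem ip_backward (S : Set (Quaternion ℝ)) (hS : ∀ a ∈ S, ∀ b ∈ S, a + b ∈ S)
    (A : Set (Quaternion ℝ)) (U : Ultrafilter S) (h0 : U ∈ zeroPlus S)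
    (hid : uaddS S hS U U = U) (hA : {x : S | (x : Quaternion ℝ) ∈ A} ∈ U) :
    IPNearZero S A := by
  have ex : ∀ (n : ℕ) (s : {s : Set S // s ∈ U}), ∃ m : S, m ∈ s.1 ∧
      (∀ᶠ m' in (U : Filter S), (⟨m.1 + m'.1, hS m.1 m.2 m'.1 m'.2⟩ : S) ∈ s.1) ∧
      ‖(m : Quaternion ℝ)‖ < (1 / 2 : ℝ) ^ n := by
    intro n s
    have h1 : s.1 ∈ uaddS S hS U U := by rw [hid]; exact s.2
    rw [mem_uaddS] at h1
    obtain ⟨m, hm⟩ := ((show ∀ᶠ m in (U : Filter S), m ∈ s.1 from s.2).and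
      (h1.and (show ∀ᶠ m : S in (U : Filter S), ‖(m : Quaternion ℝ)‖ < (1 / 2 : ℝ) ^ n from
        h0 _ (by positivity)))).exists
    exact ⟨m, hm⟩
  choose e he1 he2 he3 using ex
  let st : ℕ → {s : Set S // s ∈ U} := fun n => Nat.rec ⟨_, hA⟩ (fun n s =>
    ⟨s.1 ∩ {m' | (⟨(e n s).1 + m'.1, hS _ (e n s).2 m'.1 m'.2⟩ : S) ∈ s.1},
      Filter.inter_mem s.2 (he2 n s)⟩) n
  have hst : ∀ n, (st (n+1)).1 = (st n).1 ∩
    {m' | (⟨(e n (st n)).1 + m'.1, hS _ (e n (st n)).2 m'.1 m'.2⟩ : S) ∈ (st n).1} :=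
    fun n => rfl
  have hst0 : (st 0).1 = {x : S | (x : Quaternion ℝ) ∈ A} := rfl
  clear_value st
  have anti : Antitone fun n => (st n).1 :=
    antitone_nat_of_succ_le fun n => by
      rw [hst]; exact Set.inter_subset_left
  have key : ∀ H : Finset ℕ, H.Nonempty → ∀ n, (∀ t ∈ H, n ≤ t) →
      ∃ s ∈ (st n).1, (s : Quaternion ℝ) = ∑ t ∈ H, (e t (st t)).1 := by
    intro H
    induction H using Finset.induction_on_min with
    | empty => intro h; simp at h
    | insert a H ha ih =>
      intro _ n hn
      have hna : n ≤ a := hn a (by simp)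
      rcases H.eq_empty_or_nonempty with rfl | hne
      · exact ⟨e a (st a), anti hna (he1 _ _), by simp⟩
      · obtain ⟨s, hs, hs'⟩ := ih hne (a+1) (fun t ht => ha t ht)
        rw [hst] at hs
        refine ⟨_, anti hna hs.2, ?_⟩
        rw [Finset.sum_insert (fun h => lt_irrefl _ (ha a h)), ← hs']
  refine ⟨fun n => (e n (st n)).1, fun n => (e n (st n)).2, ?_, ?_⟩
  · have : Summable fun n => (e n (st n)).1 :=
      Summable.of_norm_bounded summable_geometric_two fun n => (he3 n (st n)).le
    exact ⟨_, this.hasSum.tendsto_sum_nat⟩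
  · rintro a ⟨H, hne, rfl⟩
    obtain ⟨s, hs, hs'⟩ := key H hne 0 (by simp)
    rw [hst0] at hs
    rw [← hs']
    exact hs

/-- For a dense subsemigroup `S` of `(ℍ, +)`, a subset `A` of `S` is an IP
set near 0 if and only if `A` belongs to some idempotent ultrafilter `p ∈ 0⁺(S)`. -/
theorem ip_near_zero_iff_idempotent (S : Set (Quaternion ℝ))
    (hSdense : Dense S)
    (hSadd : ∀ a ∈ S, ∀ b ∈ S, a + b ∈ S)
    (A : Set (Quaternion ℝ)) (hAS : A ⊆ S) :
    IPNearZero S A ↔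
      ∃ p : Ultrafilter S, p ∈ zeroPlus S ∧ uaddS S hSadd p p = p ∧
        {x : S | (x : Quaternion ℝ) ∈ A} ∈ p := by
  constructor
  · rintro ⟨x, hx, ⟨L, hL⟩, hF⟩
    have hz : Tendsto x atTop (𝓝 0) := by
      have h1 := (hL.comp (tendsto_add_atTop_nat 1)).sub hL
      simpa [Function.comp_def, Finset.sum_range_succ] using h1
    have hev : ∀ n : ℕ, ∀ᶠ k in atTop, ‖x k‖ < (1 / 2 : ℝ) ^ n := fun n => by
      have h2 := hz.norm
      rw [norm_zero] at h2
      exact h2.eventually_lt_const (by positivity)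
    obtain ⟨φ, hφ, hb⟩ := extraction_forall_of_eventually hev
    refine ip_forward S hSadd (fun n => x (φ n)) (fun n => hx _)
      (Summable.of_norm_bounded summable_geometric_two fun n => (hb n).le) A ?_
    rintro a ⟨H, hne, rfl⟩
    refine hF ⟨H.map ⟨φ, hφ.injective⟩, by simpa using hne, by simp⟩
  · rintro ⟨p, h0, hid, hA⟩
    exact ip_backward S hSadd A p h0 hid hA
end

section
/- Let S be a dense subsemigroup of (ℍ, +). A subset D of S is an IP* set near 0 (i.e., for every IP set near 0 C ⊆ S, the intersection C ∩ D is an IP set near 0) if and only if D belongs to every idempotent ultrafilter of 0⁺(S). -/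
open Filter Topology

attribute [local instance] Ultrafilter.add Ultrafilter.addSemigroup

theorem aux_idem_tails {M : Type*} [AddSemigroup M] (a : Stream' M) :
    ∃ U : Ultrafilter M, U + U = U ∧ ∀ n, ∀ᶠ m in U, m ∈ Hindman.FS (a.drop n) := by
  let S : Set (Ultrafilter M) := ⋂ n, { U | ∀ᶠ m in U, m ∈ Hindman.FS (a.drop n) }
  have h := exists_idempotent_in_compact_add_subsemigroup ?_ S ?_ ?_ ?_
  · rcases h with ⟨U, hU, U_idem⟩
    exact ⟨U, U_idem, fun n => Set.mem_iInter.mp hU n⟩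
  · exact Ultrafilter.continuous_add_left
  · apply IsCompact.nonempty_iInter_of_sequence_nonempty_isCompact_isClosed
    · intro n U hU
      filter_upwards [hU]
      rw [← Stream'.drop_drop, ← Stream'.tail_eq_drop]
      exact Hindman.FS.tail _
    · intro n
      exact ⟨pure _, mem_pure.mpr <| Hindman.FS.head _⟩
    · exact (ultrafilter_isClosed_basic _).isCompact
    · intro n
      apply ultrafilter_isClosed_basic
  · exact IsClosed.isCompact (isClosed_iInter fun i => ultrafilter_isClosed_basic _)
  · intro U hU V hV
    rw [Set.mem_iInter] at *
    intro n
    rw [Set.mem_ofPred_eq, Ultrafilter.eventually_add]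
    filter_upwards [hU n] with m hm
    obtain ⟨n', hn⟩ := Hindman.FS.add hm
    filter_upwards [hV (n' + n)] with m' hm'
    apply hn
    simpa only [Stream'.drop_drop, add_comm] using hm'

theorem aux_large {M : Type*} [AddCommSemigroup M] (U : Ultrafilter M) (hU : U + U = U)
    (s₀ : Set M) (sU : s₀ ∈ U) (t : ℕ → Set M) (ht : ∀ n, t n ∈ U) :
    ∃ a : ℕ → M, (∀ n, a n ∈ t n) ∧ Hindman.FS (a : Stream' M) ⊆ s₀ := by
  have ex : ∀ (n : ℕ) (s : {s // s ∈ U}), ∃ m, m ∈ s.1 ∧ m ∈ t n ∧ ∀ᶠ m' in U, m + m' ∈ s.1 := by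
    intro n s
    have h1 : ∀ᶠ m in U, m ∈ s.1 := s.2
    have h2 : ∀ᶠ m in U, ∀ᶠ m' in U, m + m' ∈ s.1 := by
      obtain ⟨s, hs⟩ := s
      have h4 : s ∈ U + U := by rw [hU]; exact hs
      exact h4
    have h3 : ∀ᶠ m in U, m ∈ t n := ht n
    exact (h1.and (h3.and h2)).exists
  choose e he1 he2 he3 using ex
  let st : ℕ → {s // s ∈ U} := fun n => Nat.rec ⟨s₀, sU⟩
    (fun n s => ⟨s.1 ∩ {m | e n s + m ∈ s.1}, inter_mem s.2 (he3 n s)⟩) n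
  have hst : ∀ n, (st (n+1)).1 = (st n).1 ∩ {m | e n (st n) + m ∈ (st n).1} := fun n => rfl
  refine ⟨fun n => e n (st n), fun n => he2 _ _, ?_⟩
  have key : ∀ (b : Stream' M) (m : M), m ∈ Hindman.FS b → ∀ n,
      (∀ k, b.get k = e (n + k) (st (n + k))) → m ∈ (st n).1 := by
    intro b m h
    induction h with
    | head' b =>
      intro n hb
      have := hb 0
      rw [show b.head = b.get 0 from rfl, this]
      exact he1 _ _
    | tail' b m h ih =>
      intro n hb
      have := ih (n+1) (fun k => by
        rw [Stream'.get_tail, hb, show n + (k+1) = n + 1 + k by omega])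
      rw [hst] at this
      exact this.1
    | cons' b m h ih =>
      intro n hb
      have := ih (n+1) (fun k => by
        rw [Stream'.get_tail, hb, show n + (k+1) = n + 1 + k by omega])
      rw [hst] at this
      rw [show b.head = b.get 0 from rfl, hb 0]
      exact this.2
  intro m hm
  exact key _ m hm 0 (fun k => by rw [zero_add]; rfl)

theorem aux_FS_sum {M N : Type*} [AddCommSemigroup M] [AddCommMonoid N] (f : M → N)
    (hf : ∀ a b, f (a + b) = f a + f b) (b : Stream' M) (m : M) (h : m ∈ Hindman.FS b) :
    ∃ H : Finset ℕ, H.Nonempty ∧ f m = ∑ i ∈ H, f (b.get i) := by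
  induction h with
  | head' b => exact ⟨{0}, by simp, by simp⟩
  | tail' b m h ih =>
    obtain ⟨H, h1, h2⟩ := ih
    exact ⟨H.map ⟨Nat.succ, Nat.succ_injective⟩, by simpa using h1, by simp [h2]⟩
  | cons' b m h ih =>
    obtain ⟨H, h1, h2⟩ := ih
    refine ⟨insert 0 (H.map ⟨Nat.succ, Nat.succ_injective⟩), by simp, ?_⟩
    rw [Finset.sum_insert (by simp), hf, h2]
    simp

theorem aux_sum_FS {M N : Type*} [AddCommSemigroup M] [AddCommMonoid N] (f : M → N)
    (hf : ∀ a b, f (a + b) = f a + f b) (N₀ : ℕ) : ∀ (b : Stream' M) (H : Finset ℕ), H.Nonempty →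
      (∀ i ∈ H, i < N₀) → ∃ m ∈ Hindman.FS b, f m = ∑ i ∈ H, f (b.get i) := by
  induction N₀ with
  | zero =>
    rintro b H ⟨i, hi⟩ h
    exact absurd (h i hi) (by omega)
  | succ N₀ ih =>
    intro b H hH h
    let K : Finset ℕ := (H.erase 0).image Nat.pred
    have hK : ∑ i ∈ K, f (b.tail.get i) = ∑ i ∈ H.erase 0, f (b.get i) := by
      rw [Finset.sum_image]
      · refine Finset.sum_congr rfl fun i hi => ?_
        rw [Stream'.get_tail]
        have : i ≠ 0 := (Finset.mem_erase.1 hi).1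
        congr 2
        exact Nat.succ_pred this
      · intro i hi j hj hij
        have h1 : i ≠ 0 := (Finset.mem_erase.1 hi).1
        have h2 : j ≠ 0 := (Finset.mem_erase.1 hj).1
        simp only [Nat.pred_eq_sub_one] at hij
        omega
    have hKlt : ∀ i ∈ K, i < N₀ := by
      intro i hi
      obtain ⟨j, hj, rfl⟩ := Finset.mem_image.1 hi
      have h1 := Finset.mem_erase.1 hj
      have := h j h1.2
      simp only [Nat.pred_eq_sub_one]
      omega
    by_cases hKe : (H.erase 0).Nonempty
    · obtain ⟨m, hm, hm'⟩ := ih b.tail K (hKe.image _) hKlt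
      by_cases h0 : 0 ∈ H
      · refine ⟨b.head + m, Hindman.FS.cons _ _ hm, ?_⟩
        rw [hf, hm', hK, ← Finset.add_sum_erase _ _ h0]
      · refine ⟨m, Hindman.FS.tail _ _ hm, ?_⟩
        rw [hm', hK, Finset.erase_eq_of_notMem h0]
    · rw [Finset.not_nonempty_iff_eq_empty] at hKe
      have h0 : 0 ∈ H := by
        by_contra h0
        rw [Finset.erase_eq_of_notMem h0] at hKe
        exact hH.ne_empty hKe
      refine ⟨b.head, Hindman.FS.head _, ?_⟩
      rw [← Finset.add_sum_erase _ _ h0, hKe]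
      simp

theorem aux_norm {M : Type*} [AddCommSemigroup M] (f : M → Quaternion ℝ)
    (hf : ∀ a b, f (a + b) = f a + f b) (b : Stream' M) (m : M) (h : m ∈ Hindman.FS b) :
    ∀ c : ℝ, 0 ≤ c → (∀ k, ‖f (b.get k)‖ ≤ c * (1/2)^k) → ‖f m‖ ≤ 2 * c := by
  induction h with
  | head' b =>
    intro c hc hb
    have := hb 0
    rw [show b.head = b.get 0 from rfl]
    simp only [pow_zero] at this
    linarith
  | tail' b m h ih =>
    intro c hc hb
    have := ih (c/2) (by linarith) (fun k => by
      rw [Stream'.get_tail]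
      refine (hb (k+1)).trans (le_of_eq ?_)
      rw [pow_succ]; ring)
    linarith
  | cons' b m h ih =>
    intro c hc hb
    have := ih (c/2) (by linarith) (fun k => by
      rw [Stream'.get_tail]
      refine (hb (k+1)).trans (le_of_eq ?_)
      rw [pow_succ]; ring)
    have h0 := hb 0
    rw [show b.head = b.get 0 from rfl, hf]
    simp only [pow_zero] at h0
    refine (norm_add_le _ _).trans ?_
    linarith

@[reducible] noncomputable def auxSemi (S : Set (Quaternion ℝ))
    (hS : ∀ a ∈ S, ∀ b ∈ S, a + b ∈ S) : AddCommSemigroup S where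
  add x y := ⟨x.1 + y.1, hS x.1 x.2 y.1 y.2⟩
  add_assoc x y z := Subtype.ext (add_assoc x.1 y.1 z.1)
  add_comm x y := Subtype.ext (add_comm x.1 y.1)

theorem aux_uadd (S : Set (Quaternion ℝ)) (hS : ∀ a ∈ S, ∀ b ∈ S, a + b ∈ S)
    (p q : Ultrafilter S) :
    letI := auxSemi S hS
    uaddS S hS p q = p + q := by
  ext s
  exact Iff.rfl

theorem aux_ip (S : Set (Quaternion ℝ)) (hS : ∀ a ∈ S, ∀ b ∈ S, a + b ∈ S)
    (p : Ultrafilter S) (hp : p ∈ zeroPlus S) (hi : uaddS S hS p p = p)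
    (A : Set (Quaternion ℝ)) (hA : {x : S | (x : Quaternion ℝ) ∈ A} ∈ p) : IPNearZero S A := by
  letI := auxSemi S hS
  rw [aux_uadd] at hi
  obtain ⟨a, ha, hFS⟩ := aux_large p hi _ hA
    (fun n => {s : S | ‖(s : Quaternion ℝ)‖ < (1/2)^n}) (fun n => hp _ (by positivity))
  refine ⟨fun n => a n, fun n => (a n).2, ?_, ?_⟩
  · have hs : Summable (fun n => (a n : Quaternion ℝ)) :=
      Summable.of_norm_bounded (summable_geometric_two) (fun n => (ha n).le)
    exact ⟨_, hs.hasSum.tendsto_sum_nat⟩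
  · rintro _ ⟨H, hH, rfl⟩
    obtain ⟨m, hm, hm'⟩ := aux_sum_FS (Subtype.val : S → Quaternion ℝ) (fun _ _ => rfl)
      (H.sup id + 1) a H hH (fun i hi => Nat.lt_succ_of_le (Finset.le_sup (f := id) hi))
    have h2 : (m : Quaternion ℝ) ∈ A := hFS hm
    rw [hm'] at h2
    exact h2

theorem aux_exists (S : Set (Quaternion ℝ)) (hS : ∀ a ∈ S, ∀ b ∈ S, a + b ∈ S)
    (C : Set (Quaternion ℝ)) (hC : IPNearZero S C) :
    ∃ p ∈ zeroPlus S, uaddS S hS p p = p ∧ {x : S | (x : Quaternion ℝ) ∈ C} ∈ p := by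
  letI := auxSemi S hS
  obtain ⟨x, hxS, ⟨L, hL⟩, hxC⟩ := hC
  have hx0 : Tendsto x atTop (𝓝 0) := by
    have h1 := ((tendsto_add_atTop_iff_nat 1).2 hL).sub hL
    simpa [Finset.sum_range_succ] using h1
  have hev : ∀ n : ℕ, ∀ᶠ k in atTop, ‖x k‖ < (1/2 : ℝ)^n := fun n =>
    (tendsto_zero_iff_norm_tendsto_zero.1 hx0).eventually_lt_const (by positivity)
  obtain ⟨φ, hφ, hφ'⟩ := extraction_forall_of_eventually hev
  let a : Stream' S := fun n => ⟨x (φ n), hxS _⟩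
  obtain ⟨U, hU, hUt⟩ := aux_idem_tails a
  refine ⟨U, ?_, by rw [aux_uadd]; exact hU, ?_⟩
  · intro r hr
    obtain ⟨n, hn⟩ := exists_pow_lt_of_lt_one (show 0 < r/2 by linarith)
      (show (1/2:ℝ) < 1 by norm_num)
    filter_upwards [hUt n] with m hm
    have := aux_norm (Subtype.val : S → Quaternion ℝ) (fun _ _ => rfl) _ m hm ((1/2)^n)
      (by positivity) (fun k => by
        rw [Stream'.get_drop, ← pow_add]
        exact (hφ' (n + k)).le)
    show ‖(m : Quaternion ℝ)‖ < r
    linarith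
  · filter_upwards [hUt 0] with m hm
    obtain ⟨H, h1, h2⟩ := aux_FS_sum (Subtype.val : S → Quaternion ℝ) (fun _ _ => rfl) _ m hm
    apply hxC
    refine ⟨H.map ⟨φ, hφ.injective⟩, by simpa using h1, ?_⟩
    rw [h2, Finset.sum_map]
    rfl

/-- For a dense subsemigroup `S` of `(ℍ, +)`, a subset `D` of `S` is an
IP* set near 0 if and only if `D` belongs to every idempotent ultrafilter of `0⁺(S)`. -/
theorem ipstar_near_zero_iff_every_idempotent (S : Set (Quaternion ℝ))
    (hSdense : Dense S)
    (hSadd : ∀ a ∈ S, ∀ b ∈ S, a + b ∈ S)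
    (D : Set (Quaternion ℝ)) (hDS : D ⊆ S) :
    IPStarNearZero S D ↔
      ∀ p : Ultrafilter S, p ∈ zeroPlus S → uaddS S hSadd p p = p →
        {x : S | (x : Quaternion ℝ) ∈ D} ∈ p := by
  constructor
  · intro h p hp hi
    by_contra hD
    have hD' : {x : S | (x : Quaternion ℝ) ∈ S \ D} ∈ p := by
      filter_upwards [Ultrafilter.compl_mem_iff_notMem.2 hD] with x hx
      exact ⟨x.2, hx⟩
    obtain ⟨x, -, -, hx⟩ := h (S \ D) Set.diff_subset (aux_ip S hSadd p hp hi _ hD')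
    have := hx ⟨{0}, by simp, rfl⟩
    exact this.1.2 this.2
  · intro h C hCS hC
    obtain ⟨p, hp, hi, hCp⟩ := aux_exists S hSadd C hC
    exact aux_ip S hSadd p hp hi _ (inter_mem hCp (h p hp hi))
end
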